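/- Let u : ℝ³ → ℝ³ be smooth and divergence-free, and let n ∈ ℝ³ be a fixed unit vector. Then for each x, the map ℓ ↦ (n(ℓ)⊗n(ℓ)) u(x+ℓ) integrated against a radial mollifier is divergence-free in x: if v_L^ε(x) = ∫ φ^ε(ℓ)(n(ℓ)⊗n(ℓ)) u(x+ℓ) dℓ with n(ℓ) = ℓ/‖ℓ‖ and φ^ε a smooth radial compactly supported mollifier, then div_x v_L^ε = 0. -/

import Mathlib

open MeasureTheory

/-!
Write `n` for the unit outward normal of a sphere centred at `x`. The flux `∫ n · u(x + r n) dσ(n)`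
of a divergence-free field `u` vanishes for every `r > 0`, hence so does its derivative in `r`,
which is `∫ n · Du(x + r n) n dσ(n)`. On the other hand, differentiating under the integral sign,
the divergence of the longitudinal average at `x` is `∫ ρ(ℓ) n(ℓ) · Du(x + ℓ) n(ℓ) dℓ`. Since `ρ` is
radial, in polar coordinates the inner integrals over the spheres are all zero.

The flux vanishes because every radial field `g(‖y‖) y` with `g` compactly supported is the gradient
of a compactly supported function, and so is orthogonal to divergence-free fields: the flux is
therefore orthogonal to all test functions of the radius.
-/

open Metric Set
open Module (finrank)

section Divergence

variable {E : Type*} [NormedAddCommGroup E] [NormedSpace ℝ E]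

/-- The divergence of a vector field on a normed space, as the trace of its derivative. -/
noncomputable def divergence (w : E → E) (x : E) : ℝ :=
  LinearMap.trace ℝ E (fderiv ℝ w x)

lemma divergence_smul {f : E → ℝ} {w : E → E} {x : E} [FiniteDimensional ℝ E]
    (hf : DifferentiableAt ℝ f x) (hw : DifferentiableAt ℝ w x) :
    divergence (f • w) x = f x * divergence w x + fderiv ℝ f x (w x) := by
  simp [divergence, fderiv_smul hf hw]

lemma divergence_comp_const_add (w : E → E) (a x : E) :
    divergence (fun y => w (a + y)) x = divergence w (a + x) := by
  rw [divergence, fderiv_comp_add_left, divergence]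

lemma trace_integral {α : Type*} [MeasurableSpace α] {ν : Measure α} [FiniteDimensional ℝ E]
    {A : α → E →L[ℝ] E} (hA : Integrable A ν) :
    LinearMap.trace ℝ E (∫ a, A a ∂ν : E →L[ℝ] E) = ∫ a, LinearMap.trace ℝ E (A a) ∂ν :=
  ((LinearMap.trace ℝ E ∘ₗ ContinuousLinearMap.coeLM ℝ).toContinuousLinearMap.integral_comp_comm
    hA).symm

lemma integrable_trace {α : Type*} [MeasurableSpace α] {ν : Measure α} [FiniteDimensional ℝ E]
    {A : α → E →L[ℝ] E} (hA : Integrable A ν) :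
    Integrable (fun a => LinearMap.trace ℝ E (A a)) ν :=
  (LinearMap.trace ℝ E ∘ₗ ContinuousLinearMap.coeLM ℝ).toContinuousLinearMap.integrable_comp hA

variable [FiniteDimensional ℝ E] [MeasurableSpace E] [BorelSpace E]
  {μ : Measure E} [μ.IsAddHaarMeasure]

lemma integral_fderiv_eq_zero_of_hasCompactSupport {F : Type*} [NormedAddCommGroup F]
    [NormedSpace ℝ F] {f : E → F} (hf : ContDiff ℝ 1 f) (hs : HasCompactSupport f) :
    ∫ x, fderiv ℝ f x ∂μ = 0 := by
  have hf' : Integrable (fderiv ℝ f) μ :=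
    (hf.continuous_fderiv one_ne_zero).integrable_of_hasCompactSupport (hs.fderiv ℝ)
  ext v
  rw [ContinuousLinearMap.integral_apply hf']
  simpa using integral_smul_fderiv_eq_neg_fderiv_smul_of_integrable (𝕜 := ℝ) (μ := μ)
    (f := fun _ => (1 : ℝ)) (g := f) (v := v) (by simp)
    (by simpa using hf'.apply_continuousLinearMap v)
    (by simpa using hf.continuous.integrable_of_hasCompactSupport hs)
    (by fun_prop) fun x _ => hf.differentiable one_ne_zero x

lemma integral_divergence_eq_zero_of_hasCompactSupport {w : E → E} (hw : ContDiff ℝ 1 w)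
    (hs : HasCompactSupport w) : ∫ x, divergence w x ∂μ = 0 := by
  have hw' : Integrable (fderiv ℝ w) μ :=
    (hw.continuous_fderiv one_ne_zero).integrable_of_hasCompactSupport (hs.fderiv ℝ)
  simp_rw [divergence, ← trace_integral hw', integral_fderiv_eq_zero_of_hasCompactSupport hw hs]
  simp

lemma integral_fderiv_apply_eq_zero_of_divergence_eq_zero {f : E → ℝ} {w : E → E}
    (hf : ContDiff ℝ 1 f) (hs : HasCompactSupport f) (hw : ContDiff ℝ 1 w)
    (hdiv : ∀ x, divergence w x = 0) : ∫ x, fderiv ℝ f x (w x) ∂μ = 0 := by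
  rw [← integral_divergence_eq_zero_of_hasCompactSupport (μ := μ) (hf.smul hw) hs.smul_right]
  congr 1 with x
  rw [divergence_smul (hf.differentiable one_ne_zero x) (hw.differentiable one_ne_zero x),
    hdiv, mul_zero, zero_add]

end Divergence

section ParametricIntegral

variable {α H F G W : Type*} [TopologicalSpace α] [SecondCountableTopology α]
  [MeasurableSpace α] [OpensMeasurableSpace α] {ν : Measure α}
  [NormedAddCommGroup H] [NormedSpace ℝ H]
  [NormedAddCommGroup F] [NormedSpace ℝ F] [NormedAddCommGroup G] [NormedSpace ℝ G]
  [NormedAddCommGroup W] [NormedSpace ℝ W]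

lemma integrable_bilinear_of_hasCompactSupport (B : F →L[ℝ] G →L[ℝ] W) {k : α → F} {g : α → G}
    (hk : Integrable k ν) (hs : HasCompactSupport k) (hg : Continuous g) :
    Integrable (fun a => B (k a) (g a)) ν := by
  obtain ⟨C, hC⟩ := hs.isCompact.exists_bound_of_continuousOn hg.continuousOn
  refine (hk.norm.const_mul (‖B‖ * C)).mono'
    (B.aestronglyMeasurable_comp₂ hk.1 hg.aestronglyMeasurable) (.of_forall fun a => ?_)
  by_cases ha : a ∈ tsupport k
  · calc ‖B (k a) (g a)‖ ≤ ‖B‖ * ‖k a‖ * ‖g a‖ := B.le_opNorm₂ _ _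
      _ ≤ ‖B‖ * ‖k a‖ * C := by gcongr; exact hC a ha
      _ = ‖B‖ * C * ‖k a‖ := by ring
  · simp [image_eq_zero_of_notMem_tsupport ha]

lemma hasFDerivAt_integral_apply_of_hasCompactSupport [ProperSpace H] {k : α → F →L[ℝ] G}
    (hk : Integrable k ν) (hs : HasCompactSupport k) {f : H → α → F} {f' : H → α → H →L[ℝ] F}
    (hf : ∀ x, Continuous (f x)) (hf' : Continuous fun p : H × α => f' p.1 p.2)
    (hd : ∀ x a, HasFDerivAt (f · a) (f' x a) x) (x : H) :
    HasFDerivAt (fun y => ∫ a, k a (f y a) ∂ν) (∫ a, (k a).comp (f' x a) ∂ν) x := by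
  have hf'x : Continuous (f' x) := hf'.comp (by fun_prop : Continuous fun a => (x, a))
  obtain ⟨C, hC⟩ :=
    ((isCompact_closedBall x 1).prod hs.isCompact).exists_bound_of_continuousOn hf'.continuousOn
  have hint (y : H) : Integrable (fun a => k a (f y a)) ν :=
    integrable_bilinear_of_hasCompactSupport (.id ℝ (F →L[ℝ] G)) hk hs (hf y)
  refine hasFDerivAt_integral_of_dominated_of_fderiv_le
    (F' := fun y a => (k a).comp (f' y a)) (bound := fun a => ‖k a‖ * C)
    (closedBall_mem_nhds x one_pos) (.of_forall fun y => (hint y).1) (hint x)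
    (integrable_bilinear_of_hasCompactSupport (.compL ℝ H F G) hk hs hf'x).1
    (.of_forall fun a y hy => ?_) (hk.norm.mul_const C)
    (.of_forall fun a y _ => (k a).hasFDerivAt.comp y (hd y a))
  by_cases ha : a ∈ tsupport k
  · exact ((k a).opNorm_comp_le _).trans (by gcongr; exact hC (y, a) ⟨hy, ha⟩)
  · simp [image_eq_zero_of_notMem_tsupport ha]

end ParametricIntegral

section Polar

variable {E F : Type*} [NormedAddCommGroup E] [NormedSpace ℝ E] [FiniteDimensional ℝ E]
  [Nontrivial E] [MeasurableSpace E] [BorelSpace E] {μ : Measure E} [μ.IsAddHaarMeasure]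
  [NormedAddCommGroup F] [NormedSpace ℝ F]

lemma integral_eq_integral_Ioi_integral_sphere {f : E → F} (hf : Integrable f μ) :
    ∫ x, f x ∂μ =
      ∫ r in Ioi (0 : ℝ), r ^ (finrank ℝ E - 1) •
        ∫ ω : sphere (0 : E) 1, f (r • (ω : E)) ∂μ.toSphere := by
  let e := homeomorphUnitSphereProd E
  let ν := Measure.volumeIoiPow (finrank ℝ E - 1)
  let g : sphere (0 : E) 1 × Ioi (0 : ℝ) → F := fun p => f (p.2.1 • p.1.1)
  have he : MeasurePreserving e (μ.comap (↑)) (μ.toSphere.prod ν) :=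
    μ.measurePreserving_homeomorphUnitSphereProd
  have hge (x : ({0}ᶜ : Set E)) : g (e x) = f x := by
    rw [← congrArg Subtype.val (e.symm_apply_apply x)]
    rfl
  have hg : Integrable g (μ.toSphere.prod ν) := by
    rw [← he.integrable_comp_emb e.measurableEmbedding]
    simp only [Function.comp_def, hge]
    exact (integrableOn_iff_comap_subtypeVal (by measurability)).1 hf.integrableOn
  calc ∫ x, f x ∂μ = ∫ x : ({0}ᶜ : Set E), f x ∂(μ.comap (↑)) := by
        rw [integral_subtype_comap (measurableSet_singleton _).compl, restrict_compl_singleton]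
    _ = ∫ p, g p ∂(μ.toSphere.prod ν) := by
        simp only [← hge, he.integral_comp e.measurableEmbedding]
    _ = ∫ r, ∫ ω, g (ω, r) ∂μ.toSphere ∂ν := integral_prod_symm g hg
    _ = _ := by
        simp only [ν, Measure.volumeIoiPow, ENNReal.ofReal]
        rw [integral_withDensity_eq_integral_smul
          (measurable_subtype_coe.pow_const _).real_toNNReal,
          integral_subtype_comap measurableSet_Ioi fun r => Real.toNNReal (r ^ (finrank ℝ E - 1)) •
            ∫ ω : sphere (0 : E) 1, f (r • (ω : E)) ∂μ.toSphere]
        refine setIntegral_congr_fun measurableSet_Ioi fun r hr => ?_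
        simp only [NNReal.smul_def, Real.coe_toNNReal _ (pow_nonneg hr.out.le _)]

lemma integral_radial_mul_eq_zero {ρ f : E → ℝ} (hρ : ∀ x y, ‖x‖ = ‖y‖ → ρ x = ρ y)
    (hint : Integrable (fun x => ρ x * f x) μ)
    (hf : ∀ r : ℝ, 0 < r → ∫ ω : sphere (0 : E) 1, f (r • (ω : E)) ∂μ.toSphere = 0) :
    ∫ x, ρ x * f x ∂μ = 0 := by
  obtain ⟨e, he⟩ := exists_norm_eq E zero_le_one
  have hρr (r : ℝ) (ω : sphere (0 : E) 1) : ρ (r • (ω : E)) = ρ (r • e) :=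
    hρ _ _ (by simp [norm_smul, he])
  rw [integral_eq_integral_Ioi_integral_sphere hint]
  refine setIntegral_eq_zero_of_forall_eq_zero fun r hr => ?_
  simp [hρr, integral_const_mul, hf r hr]

end Polar

section SphereFlux

lemma exists_contDiff_hasCompactSupport_fderiv_eq_radial {E : Type*} [NormedAddCommGroup E]
    [InnerProductSpace ℝ E] [FiniteDimensional ℝ E] {g : ℝ → ℝ} (hg : Continuous g)
    (hs : HasCompactSupport g) :
    ∃ f : E → ℝ, ContDiff ℝ 1 f ∧ HasCompactSupport f ∧
      ∀ x v, fderiv ℝ f x v = g ‖x‖ * inner ℝ x v := by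
  obtain ⟨R, hR, hgR⟩ := hs.exists_pos_le_norm
  let G : ℝ → ℝ := fun q => ∫ t in (R ^ 2)..q, g √t / 2
  have hGd (q : ℝ) : HasDerivAt G (g √q / 2) q :=
    ((by fun_prop : Continuous fun t => g √t / 2).integral_hasStrictDerivAt _ _).hasDerivAt
  have hG : ContDiff ℝ 1 G := by
    rw [contDiff_one_iff_deriv, funext fun q => (hGd q).deriv]
    exact ⟨fun q => (hGd q).differentiableAt, by fun_prop⟩
  refine ⟨fun x => G (‖x‖ ^ 2), hG.comp (contDiff_norm_sq ℝ), ?_, fun x v => ?_⟩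
  · refine .intro (isCompact_closedBall 0 R) fun x hx => ?_
    have hx : R < ‖x‖ := by simpa using hx
    refine intervalIntegral.integral_zero_ae (.of_forall fun t ht => ?_)
    rw [uIoc_of_le (by gcongr)] at ht
    rw [hgR _ ((Real.lt_sqrt_of_sq_lt ht.1).le.trans (le_abs_self _)), zero_div]
  · have h := (hGd (‖x‖ ^ 2)).comp_hasFDerivAt x (hasStrictFDerivAt_norm_sq x).hasFDerivAt
    rw [Real.sqrt_sq (norm_nonneg x)] at h
    calc fderiv ℝ (fun x => G (‖x‖ ^ 2)) x v
        = ((g ‖x‖ / 2) • 2 • innerSL ℝ x) v := congrArg (· v) h.fderiv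
      _ = g ‖x‖ * inner ℝ x v := by simp; ring

variable {E : Type*} [NormedAddCommGroup E] [InnerProductSpace ℝ E] [FiniteDimensional ℝ E]
  [MeasurableSpace E] [BorelSpace E]

/-- The flux of the vector field `w` through the sphere of radius `r` centred at the origin, without
the area factor `r ^ (dim E - 1)`. -/
noncomputable def sphereFlux (μ : Measure E) (w : E → E) (r : ℝ) : ℝ :=
  ∫ ω : sphere (0 : E) 1, inner ℝ (ω : E) (w (r • (ω : E))) ∂μ.toSphere

variable {μ : Measure E} [μ.IsAddHaarMeasure] {w : E → E}

lemma hasDerivAt_sphereFlux (hw : ContDiff ℝ 1 w) (r : ℝ) :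
    HasDerivAt (sphereFlux μ w)
      (∫ ω : sphere (0 : E) 1, inner ℝ (ω : E) (fderiv ℝ w (r • (ω : E)) ω) ∂μ.toSphere) r := by
  have hw' : Continuous (fderiv ℝ w) := hw.continuous_fderiv one_ne_zero
  let k : sphere (0 : E) 1 → E →L[ℝ] ℝ := fun ω => innerSL ℝ (ω : E)
  let f' : ℝ → sphere (0 : E) 1 → ℝ →L[ℝ] E :=
    fun s ω => .toSpanSingleton ℝ (fderiv ℝ w (s • (ω : E)) ω)
  have hk : Integrable k μ.toSphere :=
    Continuous.integrable_of_hasCompactSupport (by fun_prop) (.of_compactSpace k)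
  have hf' : Continuous fun p : ℝ × sphere (0 : E) 1 => f' p.1 p.2 :=
    (ContinuousLinearMap.toSpanSingletonCLE (𝕜 := ℝ) (E := E)).continuous.comp
      ((hw'.comp (by fun_prop)).clm_apply (by fun_prop))
  have hd (s : ℝ) (ω : sphere (0 : E) 1) : HasFDerivAt (fun t : ℝ => w (t • (ω : E))) (f' s ω) s :=
    ((hw.differentiable one_ne_zero _).hasFDerivAt.comp_hasDerivAt s
      (by simpa using (hasDerivAt_id s).smul_const (ω : E))).hasFDerivAt
  have hint : Integrable (fun ω => (k ω).comp (f' r ω)) μ.toSphere :=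
    integrable_bilinear_of_hasCompactSupport (.compL ℝ ℝ E ℝ) hk (.of_compactSpace k)
      (hf'.comp (by fun_prop : Continuous fun ω => (r, ω)))
  have h := (hasFDerivAt_integral_apply_of_hasCompactSupport hk (.of_compactSpace k)
    (f := fun s ω => w (s • (ω : E))) (by fun_prop) hf' hd r).hasDerivAt
  rw [ContinuousLinearMap.integral_apply hint] at h
  simpa only [k, f', ContinuousLinearMap.comp_apply, ContinuousLinearMap.toSpanSingleton_apply,
    one_smul] using! h

variable [Nontrivial E]

lemma integral_radial_mul_inner_eq_integral_sphereFlux {g : ℝ → ℝ} (hg : Continuous g)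
    (hs : HasCompactSupport g) (hw : Continuous w) :
    ∫ x, g ‖x‖ * inner ℝ x (w x) ∂μ =
      ∫ r in Ioi (0 : ℝ), g r * (r ^ finrank ℝ E * sphereFlux μ w r) := by
  have hgn : HasCompactSupport fun x : E => g ‖x‖ := by
    obtain ⟨R, -, hgR⟩ := hs.exists_pos_le_norm
    refine .intro (isCompact_closedBall 0 R) fun x hx => hgR _ ?_
    simpa using (not_le.1 (mt mem_closedBall_zero_iff.2 hx)).le
  have hint : Integrable (fun x => g ‖x‖ * inner ℝ x (w x)) μ :=
    Continuous.integrable_of_hasCompactSupport (by fun_prop) hgn.mul_right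
  rw [integral_eq_integral_Ioi_integral_sphere hint]
  refine setIntegral_congr_fun measurableSet_Ioi fun r hr => ?_
  have hr : 0 < r := hr
  have hn : r ^ finrank ℝ E = r ^ (finrank ℝ E - 1) * r :=
    (pow_sub_one_mul Module.finrank_pos.ne' r).symm
  simp [sphereFlux, norm_smul, abs_of_pos hr, real_inner_smul_left, integral_const_mul, hn]
  ring

theorem sphereFlux_eq_zero_of_divergence_eq_zero (hw : ContDiff ℝ 1 w)
    (hdiv : ∀ x, divergence w x = 0) {r : ℝ} (hr : 0 < r) : sphereFlux μ w r = 0 := by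
  have hJ : Continuous fun r => r ^ finrank ℝ E * sphereFlux μ w r :=
    (continuous_pow _).mul <|
      continuous_iff_continuousAt.2 fun r => (hasDerivAt_sphereFlux hw r).continuousAt
  have hae := isOpen_Ioi.ae_eq_zero_of_integral_contDiff_smul_eq_zero (μ := volume)
    (hJ.locallyIntegrable.locallyIntegrableOn (Ioi 0)) fun g hg hgs hgt => ?_
  · have h := Measure.eqOn_open_of_ae_eq ((ae_restrict_iff' measurableSet_Ioi).2 hae) isOpen_Ioi
      hJ.continuousOn continuousOn_const hr
    exact (mul_eq_zero.1 h).resolve_left (pow_pos hr _).ne'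
  · obtain ⟨f, hf, hfs, hfd⟩ :=
      exists_contDiff_hasCompactSupport_fderiv_eq_radial (E := E) hg.continuous hgs
    calc ∫ r, g r • (r ^ finrank ℝ E * sphereFlux μ w r)
        = ∫ r in Ioi (0 : ℝ), g r * (r ^ finrank ℝ E * sphereFlux μ w r) := by
          refine (setIntegral_eq_integral_of_forall_compl_eq_zero fun r hr => ?_).symm
          rw [image_eq_zero_of_notMem_tsupport fun h => hr (hgt h), zero_smul]
      _ = ∫ x, fderiv ℝ f x (w x) ∂μ := by
          simp_rw [← integral_radial_mul_inner_eq_integral_sphereFlux hg.continuous hgs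
            hw.continuous, hfd]
      _ = 0 := integral_fderiv_apply_eq_zero_of_divergence_eq_zero hf hfs hw hdiv

theorem integral_sphere_inner_fderiv_eq_zero (hw : ContDiff ℝ 1 w)
    (hdiv : ∀ x, divergence w x = 0) {r : ℝ} (hr : 0 < r) :
    ∫ ω : sphere (0 : E) 1, inner ℝ (ω : E) (fderiv ℝ w (r • (ω : E)) ω) ∂μ.toSphere = 0 := by
  have h : sphereFlux μ w =ᶠ[nhds r] fun _ => 0 := by
    filter_upwards [Ioi_mem_nhds hr] with s hs
    exact sphereFlux_eq_zero_of_divergence_eq_zero hw hdiv hs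
  exact (hasDerivAt_sphereFlux hw r).unique ((hasDerivAt_const r 0).congr_of_eventuallyEq h)

end SphereFlux

section LongitudinalAverage

variable {E : Type*} [NormedAddCommGroup E] [InnerProductSpace ℝ E]

lemma trace_starProjection_singleton_comp [FiniteDimensional ℝ E] {v : E} (hv : ‖v‖ = 1)
    (A : E →L[ℝ] E) :
    LinearMap.trace ℝ E ((ℝ ∙ v).starProjection.comp A : E →L[ℝ] E) = inner ℝ v (A v) := by
  have h : (((ℝ ∙ v).starProjection.comp A : E →L[ℝ] E) : E →ₗ[ℝ] E) =
      ((innerSL ℝ v).comp A : E →ₗ[ℝ] ℝ).smulRight v := by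
    ext w
    simp [Submodule.starProjection_unit_singleton ℝ hv]
  rw [h, LinearMap.trace_smulRight]
  simp

variable [MeasurableSpace E]

/-- The longitudinal average of the vector field `u` with kernel `ρ`. The matrix `n(ℓ) ⊗ n(ℓ)` with
`n(ℓ) = ℓ / ‖ℓ‖` is encoded as the orthogonal projection onto the line through `ℓ`; at `ℓ = 0` both
are zero. -/
noncomputable def longitudinalAverage (μ : Measure E) (ρ : E → ℝ) (u : E → E) (x : E) : E :=
  ∫ ℓ, ρ ℓ • (ℝ ∙ ℓ).starProjection (u (x + ℓ)) ∂μ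

variable [FiniteDimensional ℝ E] [BorelSpace E] {μ : Measure E} {ρ : E → ℝ} {u : E → E}

lemma integrable_smul_starProjection_singleton (hρ : Integrable ρ μ) :
    Integrable (fun ℓ => ρ ℓ • (ℝ ∙ ℓ).starProjection) μ := by
  have heq (ℓ : E) : (ℝ ∙ ℓ).starProjection = (‖ℓ‖ ^ 2)⁻¹ • InnerProductSpace.rankOne ℝ ℓ ℓ := by
    ext w
    simp [Submodule.starProjection_singleton, div_eq_inv_mul, mul_smul]
  have hm : AEStronglyMeasurable (fun ℓ : E => (ℝ ∙ ℓ).starProjection) μ := by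
    simp_rw [heq]
    exact (by fun_prop : Measurable fun ℓ : E => (‖ℓ‖ ^ 2)⁻¹).aestronglyMeasurable.smul
      ((InnerProductSpace.rankOne ℝ).continuous.clm_apply continuous_id).aestronglyMeasurable
  exact hρ.smul_bdd 1 hm (.of_forall fun ℓ => (ℝ ∙ ℓ).starProjection_norm_le)

lemma hasFDerivAt_longitudinalAverage (hρ : Integrable ρ μ) (hs : HasCompactSupport ρ)
    (hu : ContDiff ℝ 1 u) (x : E) :
    HasFDerivAt (longitudinalAverage μ ρ u)
      (∫ ℓ, ρ ℓ • (ℝ ∙ ℓ).starProjection.comp (fderiv ℝ u (x + ℓ)) ∂μ) x := by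
  have hu' : Continuous (fderiv ℝ u) := hu.continuous_fderiv one_ne_zero
  exact hasFDerivAt_integral_apply_of_hasCompactSupport
    (integrable_smul_starProjection_singleton hρ) hs.smul_right (f := fun y ℓ => u (y + ℓ))
    (f' := fun y ℓ => fderiv ℝ u (y + ℓ)) (by fun_prop) (hu'.comp continuous_add)
    (fun y ℓ => (hasFDerivAt_comp_add_right ℓ).2 (hu.differentiable one_ne_zero _).hasFDerivAt) x

lemma trace_integral_smul_starProjection_singleton_comp_fderiv_eq_zero [μ.IsAddHaarMeasure]
    (hu : ContDiff ℝ 1 u) (hdiv : ∀ x, divergence u x = 0) (hρ : Integrable ρ μ)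
    (hs : HasCompactSupport ρ) (hrad : ∀ ℓ ℓ', ‖ℓ‖ = ‖ℓ'‖ → ρ ℓ = ρ ℓ') :
    LinearMap.trace ℝ E
      (∫ ℓ, ρ ℓ • (ℝ ∙ ℓ).starProjection.comp (fderiv ℝ u ℓ) ∂μ : E →L[ℝ] E) = 0 := by
  rcases subsingleton_or_nontrivial E with _ | _
  · rw [Subsingleton.elim (∫ ℓ, ρ ℓ • (ℝ ∙ ℓ).starProjection.comp (fderiv ℝ u ℓ) ∂μ) 0]
    simp
  have hint : Integrable (fun ℓ => ρ ℓ • (ℝ ∙ ℓ).starProjection.comp (fderiv ℝ u ℓ)) μ :=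
    integrable_bilinear_of_hasCompactSupport (.compL ℝ E E E)
      (integrable_smul_starProjection_singleton hρ) hs.smul_right
      (hu.continuous_fderiv one_ne_zero)
  have htrace (ℓ : E) :
      LinearMap.trace ℝ E (ρ ℓ • (ℝ ∙ ℓ).starProjection.comp (fderiv ℝ u ℓ) : E →L[ℝ] E) =
        ρ ℓ * LinearMap.trace ℝ E ((ℝ ∙ ℓ).starProjection.comp (fderiv ℝ u ℓ) : E →L[ℝ] E) := by
    simp
  have hint' := integrable_trace hint
  simp only [trace_integral hint, htrace] at hint' ⊢
  refine integral_radial_mul_eq_zero hrad hint' fun r hr => ?_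
  have hω (ω : sphere (0 : E) 1) :=
    trace_starProjection_singleton_comp (norm_eq_of_mem_sphere ω) (fderiv ℝ u (r • (ω : E)))
  simp_rw [Submodule.span_singleton_smul_eq hr.ne'.isUnit, hω]
  exact integral_sphere_inner_fderiv_eq_zero hu hdiv hr

theorem divergence_longitudinalAverage_eq_zero [μ.IsAddHaarMeasure] (hu : ContDiff ℝ 1 u)
    (hdiv : ∀ x, divergence u x = 0) (hρ : Integrable ρ μ) (hs : HasCompactSupport ρ)
    (hrad : ∀ ℓ ℓ', ‖ℓ‖ = ‖ℓ'‖ → ρ ℓ = ρ ℓ') (x : E) :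
    divergence (longitudinalAverage μ ρ u) x = 0 := by
  rw [divergence, (hasFDerivAt_longitudinalAverage hρ hs hu x).fderiv]
  simp_rw [← fderiv_comp_add_left]
  exact trace_integral_smul_starProjection_singleton_comp_fderiv_eq_zero
    (hu.comp (contDiff_const.add contDiff_id))
    (fun ℓ => by rw [divergence_comp_const_add, hdiv]) hρ hs hrad

end LongitudinalAverage

section Coordinates

variable {ι : Type*} [Fintype ι]

lemma divergence_eq_sum_fderiv_apply_single [DecidableEq ι]
    (v : EuclideanSpace ℝ ι → EuclideanSpace ℝ ι) (x : EuclideanSpace ℝ ι) :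
    divergence v x = ∑ i, fderiv ℝ v x (EuclideanSpace.single i 1) i := by
  simp [divergence, LinearMap.trace_eq_sum_inner _ (EuclideanSpace.basisFun ι ℝ),
    EuclideanSpace.inner_single_left]

lemma divergence_eq_sum_fderiv_coord [DecidableEq ι]
    {v : EuclideanSpace ℝ ι → EuclideanSpace ℝ ι} {x : EuclideanSpace ℝ ι}
    (hv : DifferentiableAt ℝ v x) :
    divergence v x = ∑ i, fderiv ℝ (fun y => v y i) x (EuclideanSpace.single i 1) := by
  have hcoord (i : ι) : fderiv ℝ (fun y => v y i) x = (EuclideanSpace.proj i).comp (fderiv ℝ v x) :=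
    ((EuclideanSpace.proj i : EuclideanSpace ℝ ι →L[ℝ] ℝ).hasFDerivAt.comp x hv.hasFDerivAt).fderiv
  simp [divergence_eq_sum_fderiv_apply_single, hcoord]

lemma starProjection_singleton_apply_coord (ℓ w : EuclideanSpace ℝ ι) (i : ι) :
    (ℝ ∙ ℓ).starProjection w i = ℓ i / ‖ℓ‖ * ∑ j, ℓ j / ‖ℓ‖ * w j := by
  simp only [Submodule.starProjection_singleton, PiLp.smul_apply, PiLp.inner_apply, smul_eq_mul,
    RCLike.inner_apply, conj_trivial, RCLike.ofReal_real_eq_id, id_eq, Finset.sum_div,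
    Finset.mul_sum, Finset.sum_mul]
  exact Finset.sum_congr rfl fun j _ => by ring

lemma longitudinalAverage_apply_coord {μ : Measure (EuclideanSpace ℝ ι)}
    {ρ : EuclideanSpace ℝ ι → ℝ} {u : EuclideanSpace ℝ ι → EuclideanSpace ℝ ι}
    (hρ : Integrable ρ μ) (hs : HasCompactSupport ρ) (hu : Continuous u)
    (x : EuclideanSpace ℝ ι) (i : ι) :
    longitudinalAverage μ ρ u x i =
      ∫ ℓ, ρ ℓ * (ℓ i / ‖ℓ‖ * ∑ j, ℓ j / ‖ℓ‖ * u (x + ℓ) j) ∂μ := by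
  have hint : Integrable (fun ℓ => ρ ℓ • (ℝ ∙ ℓ).starProjection (u (x + ℓ))) μ :=
    integrable_bilinear_of_hasCompactSupport (.id ℝ _)
      (integrable_smul_starProjection_singleton hρ) hs.smul_right
      (by fun_prop : Continuous fun ℓ => u (x + ℓ))
  simp_rw [← starProjection_singleton_apply_coord]
  exact ((EuclideanSpace.proj i).integral_comp_comm hint).symm

theorem mollified_longitudinal_div_free_general [DecidableEq ι]
    {μ : Measure (EuclideanSpace ℝ ι)} [μ.IsAddHaarMeasure]
    {u : EuclideanSpace ℝ ι → EuclideanSpace ℝ ι} {ρ : EuclideanSpace ℝ ι → ℝ}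
    (hu : ContDiff ℝ 1 u) (hdiv : ∀ x, ∑ j, fderiv ℝ u x (EuclideanSpace.single j 1) j = 0)
    (hρ : Integrable ρ μ) (hs : HasCompactSupport ρ) (hrad : ∀ ℓ ℓ', ‖ℓ‖ = ‖ℓ'‖ → ρ ℓ = ρ ℓ')
    (x : EuclideanSpace ℝ ι) :
    ∑ i, fderiv ℝ (fun y => ∫ ℓ, ρ ℓ * (ℓ i / ‖ℓ‖ * ∑ j, ℓ j / ‖ℓ‖ * u (y + ℓ) j) ∂μ)
      x (EuclideanSpace.single i 1) = 0 := by
  simp_rw [← divergence_eq_sum_fderiv_apply_single] at hdiv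
  simp_rw [← longitudinalAverage_apply_coord hρ hs hu.continuous]
  have hd := (hasFDerivAt_longitudinalAverage hρ hs hu x).differentiableAt
  rw [← divergence_eq_sum_fderiv_coord hd]
  exact divergence_longitudinalAverage_eq_zero hu hdiv hρ hs hrad x

end Coordinates

/-- The mollified longitudinal field of a divergence-free field is divergence-free. -/
theorem mollified_longitudinal_div_free
    (u : EuclideanSpace ℝ (Fin 3) → EuclideanSpace ℝ (Fin 3)) (hu : ContDiff ℝ 1 u)
    (hdiv : ∀ x, ∑ j, fderiv ℝ u x (EuclideanSpace.single j 1) j = 0)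
    (φ : EuclideanSpace ℝ (Fin 3) → ℝ) (hφ : ContDiff ℝ (⊤ : ℕ∞) φ)
    (hφrad : ∀ ℓ ℓ' : EuclideanSpace ℝ (Fin 3), ‖ℓ‖ = ‖ℓ'‖ → φ ℓ = φ ℓ')
    (hφsupp : HasCompactSupport φ) (hφint : (∫ ℓ, φ ℓ) = 1)
    (ε : ℝ) (hε : 0 < ε) (x : EuclideanSpace ℝ (Fin 3)) :
    ∑ i, fderiv ℝ
      (fun y : EuclideanSpace ℝ (Fin 3) =>
        ∫ ℓ : EuclideanSpace ℝ (Fin 3),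
          (ε ^ 3)⁻¹ * φ (ε⁻¹ • ℓ) * ((ℓ i / ‖ℓ‖) * ∑ j, (ℓ j / ‖ℓ‖) * u (y + ℓ) j))
      x (EuclideanSpace.single i 1) = 0 := by
  have hs : HasCompactSupport fun ℓ => (ε ^ 3)⁻¹ * φ (ε⁻¹ • ℓ) :=
    (hφsupp.comp_smul (inv_ne_zero hε.ne')).mul_left
  have hcont : Continuous fun ℓ => (ε ^ 3)⁻¹ * φ (ε⁻¹ • ℓ) := by fun_prop
  exact mollified_longitudinal_div_free_general hu hdiv
    (hcont.integrable_of_hasCompactSupport hs) hs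
    (fun ℓ ℓ' h => by rw [hφrad _ (ε⁻¹ • ℓ') (by simp only [norm_smul, h])]) x
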